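/- Let p be a prime, n ≥ 1, and f ∈ 𝔽_p[x₁,…,xₙ] a polynomial of total degree at most n. Suppose there is a weighting λ such that f has a unique term of maximal λ-weight, and that term is c·x₁x₂⋯xₙ with c ≠ 0. Then Tr(f^{p−1}) = 1; consequently g ↦ Tr(f^{p−1}·g) is a Frobenius splitting of 𝔽_p[x₁,…,xₙ], and the principal ideal ⟨f⟩ is compatibly split by it. -/

import Mathlib

open MvPolynomial

/-- The near-splitting `Tr` on `𝔽_p[x₁,…,xₙ]`: on a monomial `∏ xᵢ^{eᵢ}` it gives
`∏ xᵢ^{(eᵢ+1)/p - 1}` if `p ∣ eᵢ + 1` for all `i`, and `0` otherwise, extended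
`𝔽_p`-linearly (note that `c^{1/p} = c` for `c ∈ 𝔽_p`). -/
noncomputable def Tr (p n : ℕ) (g : MvPolynomial (Fin n) (ZMod p)) :
    MvPolynomial (Fin n) (ZMod p) :=
  ∑ m ∈ g.support,
    if ∀ i, p ∣ (m i + 1) then
      monomial (Finsupp.equivFunOnFinite.symm fun i => (m i + 1) / p - 1) (g.coeff m)
    else 0

/-- A Frobenius splitting is an additive map `φ` with `φ (a^p * b) = a * φ b` and `φ 1 = 1`. -/
def IsFrobeniusSplitting (p : ℕ) {R : Type*} [CommRing R] (φ : R → R) : Prop :=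
  (∀ a b : R, φ (a + b) = φ a + φ b) ∧ (∀ a b : R, φ (a ^ p * b) = a * φ b) ∧ φ 1 = 1

/-- The `λ`-weight of an exponent vector `m` is `∑ᵢ λᵢ·mᵢ`. -/
def wtOf {n : ℕ} (lam : Fin n → ℕ) (m : Fin n →₀ ℕ) : ℕ := ∑ i, lam i * m i

/-- The leading form `init_λ(g)`: the sum of the terms of `g` of maximal `λ`-weight. -/
noncomputable def initForm {R : Type*} [CommRing R] {n : ℕ} (lam : Fin n → ℕ)
    (g : MvPolynomial (Fin n) R) : MvPolynomial (Fin n) R :=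
  ∑ m ∈ g.support.filter (fun m => ∀ m' ∈ g.support, wtOf lam m' ≤ wtOf lam m),
    MvPolynomial.monomial m (g.coeff m)

/-- The initial ideal `init_λ(I)`, spanned by the leading forms of the nonzero
elements of `I`. -/
noncomputable def initIdeal {R : Type*} [CommRing R] {n : ℕ} (lam : Fin n → ℕ)
    (I : Ideal (MvPolynomial (Fin n) R)) : Ideal (MvPolynomial (Fin n) R) :=
  Ideal.span {h | ∃ g ∈ I, g ≠ 0 ∧ initForm lam g = h}

/-- The exponent vector `p·d + (p-1)·1`. -/
noncomputable def shiftExp (p : ℕ) {n : ℕ} (d : Fin n →₀ ℕ) : Fin n →₀ ℕ :=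
  Finsupp.equivFunOnFinite.symm fun i => p * d i + (p - 1)

theorem shiftExp_apply (p : ℕ) {n : ℕ} (d : Fin n →₀ ℕ) (i : Fin n) :
    shiftExp p d i = p * d i + (p - 1) := rfl

theorem coeff_Tr {p : ℕ} (hp : p.Prime) {n : ℕ} (g : MvPolynomial (Fin n) (ZMod p))
    (d : Fin n →₀ ℕ) : (Tr p n g).coeff d = g.coeff (shiftExp p d) := by
  classical
  have hp0 : 0 < p := hp.pos
  unfold Tr
  rw [coeff_sum, Finset.sum_eq_single (shiftExp p d)]
  · have h1 : ∀ i, shiftExp p d i + 1 = p * (d i + 1) := by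
      intro i
      rw [shiftExp_apply, mul_add]
      omega
    rw [if_pos (fun i => ⟨d i + 1, h1 i⟩), coeff_monomial, if_pos]
    ext i
    simp [h1, hp0]
  · intro m _ hne
    split_ifs with h
    · rw [coeff_monomial, if_neg]
      intro he
      apply hne
      ext i
      obtain ⟨k, hk⟩ := h i
      have h2 := DFunLike.congr_fun he i
      simp only [Finsupp.equivFunOnFinite_symm_apply_apply] at h2
      rw [hk, Nat.mul_div_cancel_left _ hp0] at h2
      rw [shiftExp_apply, ← h2]
      cases k with
      | zero => simp at hk
      | succ k =>
        rw [mul_add] at hk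
        simp only [Nat.add_sub_cancel]
        omega
    · simp
  · intro h
    rw [notMem_support_iff] at h
    rw [h]
    split_ifs <;> simp

theorem Tr_add {p : ℕ} (hp : p.Prime) {n : ℕ} (a b : MvPolynomial (Fin n) (ZMod p)) :
    Tr p n (a + b) = Tr p n a + Tr p n b := by
  ext d
  simp [coeff_Tr hp]

theorem Tr_pow_mul {p : ℕ} (hp : p.Prime) {n : ℕ} (a b : MvPolynomial (Fin n) (ZMod p)) :
    Tr p n (a ^ p * b) = a * Tr p n b := by
  classical
  haveI : Fact p.Prime := ⟨hp⟩
  have hp0 : 0 < p := hp.pos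
  induction a using MvPolynomial.induction_on' with
  | monomial s c =>
    ext d
    rw [monomial_pow, ZMod.pow_card, coeff_Tr hp, coeff_monomial_mul', coeff_monomial_mul',
      coeff_Tr hp]
    have hiff : p • s ≤ shiftExp p d ↔ s ≤ d := by
      rw [Finsupp.le_def, Finsupp.le_def]
      refine forall_congr' fun i => ?_
      rw [shiftExp_apply, Finsupp.smul_apply, smul_eq_mul]
      constructor
      · intro h
        by_contra! hlt
        have := Nat.mul_le_mul_left p (Nat.succ_le_of_lt hlt)
        rw [Nat.mul_succ] at this
        omega
      · intro h
        exact (Nat.mul_le_mul_left p h).trans (Nat.le_add_right _ _)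
    by_cases h : s ≤ d
    · rw [if_pos h, if_pos (hiff.2 h)]
      congr 2
      ext i
      have h1 := Nat.mul_le_mul_left p (h i)
      simp only [shiftExp_apply, Finsupp.coe_tsub, Pi.sub_apply, Finsupp.smul_apply, smul_eq_mul,
        Nat.mul_sub]
      omega
    · rw [if_neg h, if_neg (fun h' => h (hiff.1 h'))]
  | add q r hq hr => rw [add_pow_char, add_mul, Tr_add hp, hq, hr, add_mul]

/-- The all-ones exponent vector. -/
noncomputable def onesExp (n : ℕ) : Fin n →₀ ℕ := Finsupp.equivFunOnFinite.symm fun _ : Fin n => 1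

theorem wtOf_add {n : ℕ} (lam : Fin n → ℕ) (a b : Fin n →₀ ℕ) :
    wtOf lam (a + b) = wtOf lam a + wtOf lam b := by
  simp [wtOf, mul_add, Finset.sum_add_distrib]

theorem wtOf_nsmul {n : ℕ} (lam : Fin n → ℕ) (k : ℕ) (a : Fin n →₀ ℕ) :
    wtOf lam (k • a) = k * wtOf lam a := by
  simp [wtOf, Finset.mul_sum, mul_left_comm]

theorem pow_lead {R : Type*} [CommRing R] {n : ℕ} (lam : Fin n → ℕ)
    (f : MvPolynomial (Fin n) R) (u : Fin n →₀ ℕ)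
    (huniq : ∀ m ∈ f.support, m ≠ u → wtOf lam m < wtOf lam u) (k : ℕ) :
    (∀ m, (f ^ k).coeff m ≠ 0 → m ≠ k • u → wtOf lam m < k * wtOf lam u) ∧
      (f ^ k).coeff (k • u) = f.coeff u ^ k := by
  classical
  induction k with
  | zero =>
    refine ⟨fun m h1 h2 => ?_, by simp⟩
    rw [pow_zero, coeff_one] at h1
    simp only [zero_smul] at h2
    rw [if_neg (Ne.symm h2)] at h1
    exact absurd rfl h1
  | succ k ih =>
    obtain ⟨ih1, ih2⟩ := ih
    have hle1 : ∀ m, (f ^ k).coeff m ≠ 0 → wtOf lam m ≤ k * wtOf lam u := by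
      intro m hm
      by_cases h : m = k • u
      · rw [h, wtOf_nsmul]
      · exact (ih1 m hm h).le
    have hle2 : ∀ m, f.coeff m ≠ 0 → wtOf lam m ≤ wtOf lam u := by
      intro m hm
      by_cases h : m = u
      · rw [h]
      · exact (huniq m (mem_support_iff.2 hm) h).le
    have key : ∀ a b, (f ^ k).coeff a ≠ 0 → f.coeff b ≠ 0 → (a, b) ≠ (k • u, u) →
        wtOf lam (a + b) < (k + 1) * wtOf lam u := by
      intro a b ha hb hab
      rw [wtOf_add, add_mul, one_mul]
      by_cases h : a = k • u
      · have hb' : b ≠ u := fun hbu => hab (by rw [h, hbu])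
        exact add_lt_add_of_le_of_lt (hle1 a ha) (huniq b (mem_support_iff.2 hb) hb')
      · exact add_lt_add_of_lt_of_le (ih1 a ha h) (hle2 b hb)
    constructor
    · intro m hm hne
      rw [pow_succ, coeff_mul] at hm
      obtain ⟨⟨a, b⟩, hab, h0⟩ := Finset.exists_ne_zero_of_sum_ne_zero hm
      rw [Finset.HasAntidiagonal.mem_antidiagonal] at hab
      simp only at hab h0
      rw [← hab]
      refine key a b (left_ne_zero_of_mul h0) (right_ne_zero_of_mul h0) ?_
      intro he
      rw [Prod.mk.injEq] at he
      apply hne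
      rw [← hab, he.1, he.2, succ_nsmul]
    · rw [pow_succ, coeff_mul, Finset.sum_eq_single (k • u, u), ih2, pow_succ]
      · rintro ⟨a, b⟩ hab hne
        by_contra h0
        rw [Finset.HasAntidiagonal.mem_antidiagonal] at hab
        simp only at hab h0
        have := key a b (left_ne_zero_of_mul h0) (right_ne_zero_of_mul h0) hne
        rw [hab, wtOf_nsmul] at this
        exact lt_irrefl _ this
      · intro h
        exact absurd (by rw [Finset.HasAntidiagonal.mem_antidiagonal, succ_nsmul]) h

theorem Tr_pow_eq_one {p : ℕ} (hp : p.Prime) {n : ℕ} (lam : Fin n → ℕ)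
    (f : MvPolynomial (Fin n) (ZMod p)) (hdeg : f.totalDegree ≤ n)
    (hmem : onesExp n ∈ f.support)
    (huniq : ∀ m ∈ f.support, m ≠ onesExp n → wtOf lam m < wtOf lam (onesExp n)) :
    Tr p n (f ^ (p - 1)) = 1 := by
  classical
  haveI : Fact p.Prime := ⟨hp⟩
  ext d
  rw [coeff_Tr hp, coeff_one]
  split_ifs with h
  · subst h
    have h1 : shiftExp p (0 : Fin n →₀ ℕ) = (p - 1) • onesExp n := by
      ext i
      simp [shiftExp_apply, onesExp]
    rw [h1, (pow_lead lam f _ huniq (p - 1)).2]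
    exact ZMod.pow_card_sub_one_eq_one (mem_support_iff.1 hmem)
  · apply coeff_eq_zero_of_totalDegree_lt
    have h1 : (f ^ (p - 1)).totalDegree ≤ (p - 1) * n :=
      (totalDegree_pow _ _).trans (Nat.mul_le_mul_left _ hdeg)
    refine lt_of_le_of_lt h1 ?_
    have h2 : ∑ i ∈ (shiftExp p d).support, shiftExp p d i = ∑ i, shiftExp p d i :=
      Finset.sum_subset (Finset.subset_univ _) (fun i _ hi => Finsupp.notMem_support_iff.1 hi)
    rw [h2]
    have h3 : (p - 1) * n = ∑ _i : Fin n, (p - 1) := by simp [mul_comm]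
    rw [h3]
    obtain ⟨i, hi⟩ : ∃ i, d i ≠ 0 := by
      by_contra! hd
      exact h (by ext i; simp [hd i])
    refine Finset.sum_lt_sum (fun j _ => by rw [shiftExp_apply]; omega)
      ⟨i, Finset.mem_univ _, ?_⟩
    rw [shiftExp_apply]
    have := Nat.mul_pos hp.pos (Nat.pos_of_ne_zero hi)
    omega

/-- if `deg f ≤ n` and, for some weighting `λ`, the unique term of `f` of
maximal `λ`-weight is `c·x₁⋯xₙ` with `c ≠ 0`, then `Tr(f^{p−1}) = 1`; consequently
`g ↦ Tr(f^{p−1}·g)` is a Frobenius splitting, and `⟨f⟩` is compatibly split by it. -/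
theorem stmt_17 {p : ℕ} (hp : p.Prime) {n : ℕ} (hn : 1 ≤ n) (lam : Fin n → ℕ)
    (f : MvPolynomial (Fin n) (ZMod p)) (hdeg : f.totalDegree ≤ n)
    (hmem : (Finsupp.equivFunOnFinite.symm fun _ : Fin n => 1) ∈ f.support)
    (huniq : ∀ m ∈ f.support, m ≠ (Finsupp.equivFunOnFinite.symm fun _ : Fin n => 1) →
      wtOf lam m < wtOf lam (Finsupp.equivFunOnFinite.symm fun _ : Fin n => 1)) :
    Tr p n (f ^ (p - 1)) = 1 ∧
      IsFrobeniusSplitting p (fun g => Tr p n (f ^ (p - 1) * g)) ∧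
        ∀ g ∈ Ideal.span {f}, Tr p n (f ^ (p - 1) * g) ∈ Ideal.span {f} := by
  have h1 : Tr p n (f ^ (p - 1)) = 1 := Tr_pow_eq_one hp lam f hdeg hmem huniq
  refine ⟨h1, ⟨fun a b => ?_, fun a b => ?_, ?_⟩, fun g hg => ?_⟩
  · simp only [mul_add, Tr_add hp]
  · simp only
    rw [mul_left_comm, Tr_pow_mul hp]
  · simpa using h1
  · rw [Ideal.mem_span_singleton] at hg ⊢
    obtain ⟨h, rfl⟩ := hg
    rw [← mul_assoc, ← pow_succ, Nat.sub_add_cancel hp.pos, Tr_pow_mul hp]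
    exact dvd_mul_right _ _
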